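/- Let T be an ergodic automorphism of a standard probability Borel space (X, ℬ, μ). If T is not mixing, then T has a non-trivial factor which is disjoint (in the sense of Furstenberg) from all mixing automorphisms. (Parreau) -/

import Mathlib

open MeasureTheory Filter
open scoped Topology

universe u

/-- A measure-preserving map is mixing: `μ(f⁻ⁿA ∩ B) → μ(A)μ(B)` for all measurable `A, B`. -/
def MixingMap {Z : Type*} [MeasurableSpace Z] (f : Z → Z) (μ : Measure Z) : Prop :=
  ∀ A B : Set Z, MeasurableSet A → MeasurableSet B →
    Tendsto (fun n : ℕ => μ ((f^[n]) ⁻¹' A ∩ B)) atTop (𝓝 (μ A * μ B))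

/-- `ρ` is a joining of the factor system `(X, 𝒞, μ', T)` and the system `(W, σ, S)`:
a probability measure on `X × W` (with the σ-algebra `𝒞 ⊗ mW`), with marginals `μ'` and
`σ`, invariant under `T × S`. -/
def IsFactorJoining {X W : Type*} (mX' : MeasurableSpace X) (mW : MeasurableSpace W)
    (μ' : @Measure X mX') (σ : @Measure W mW) (T : X → X) (S : W → W)
    (ρ : @Measure (X × W) (mX'.prod mW)) : Prop :=
  letI := mX'
  letI := mW
  @IsProbabilityMeasure _ _ ρ ∧
    @Measure.map _ _ (mX'.prod mW) mX' Prod.fst ρ = μ' ∧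
    @Measure.map _ _ (mX'.prod mW) mW Prod.snd ρ = σ ∧
    @Measure.map _ _ (mX'.prod mW) (mX'.prod mW) (Prod.map T S) ρ = ρ

set_option linter.unusedSectionVars false
set_option linter.unusedVariables false
/-- bounded measurable functions -/
def BM {Ω : Type*} [MeasurableSpace Ω] (f : Ω → ℝ) : Prop :=
  Measurable f ∧ ∃ C : ℝ, ∀ x, |f x| ≤ C

namespace BM

variable {Ω Ω' : Type*} [MeasurableSpace Ω] [MeasurableSpace Ω']

lemma const (c : ℝ) : BM (fun _ : Ω => c) := ⟨measurable_const, |c|, fun _ => le_rfl⟩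

lemma mul {f g : Ω → ℝ} (hf : BM f) (hg : BM g) : BM (fun x => f x * g x) := by
  obtain ⟨hf, C, hC⟩ := hf
  obtain ⟨hg, D, hD⟩ := hg
  refine ⟨hf.mul hg, C * D, fun x => ?_⟩
  rw [abs_mul]
  exact mul_le_mul (hC x) (hD x) (abs_nonneg _) ((abs_nonneg _).trans (hC x))

lemma add {f g : Ω → ℝ} (hf : BM f) (hg : BM g) : BM (fun x => f x + g x) := by
  obtain ⟨hf, C, hC⟩ := hf
  obtain ⟨hg, D, hD⟩ := hg
  exact ⟨hf.add hg, C + D, fun x => (abs_add_le _ _).trans (add_le_add (hC x) (hD x))⟩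

lemma sub {f g : Ω → ℝ} (hf : BM f) (hg : BM g) : BM (fun x => f x - g x) := by
  obtain ⟨hf, C, hC⟩ := hf
  obtain ⟨hg, D, hD⟩ := hg
  exact ⟨hf.sub hg, C + D, fun x => (abs_sub _ _).trans (add_le_add (hC x) (hD x))⟩

lemma comp {f : Ω → ℝ} (hf : BM f) {t : Ω' → Ω} (ht : Measurable t) : BM (fun x => f (t x)) :=
  ⟨hf.1.comp ht, hf.2.imp fun _ h x => h _⟩

lemma of01 {f : Ω → ℝ} (hf : Measurable f) (h : ∀ x, 0 ≤ f x ∧ f x ≤ 1) : BM f :=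
  ⟨hf, 1, fun x => abs_le.2 ⟨by linarith [(h x).1], (h x).2⟩⟩

lemma sum {ι : Type*} (s : Finset ι) {f : ι → Ω → ℝ} (hf : ∀ i ∈ s, BM (f i)) :
    BM (fun x => ∑ i ∈ s, f i x) := by
  classical
  induction s using Finset.induction_on with
  | empty => simpa using const 0
  | insert a s ha ih =>
    simp only [Finset.sum_insert ha]
    exact (hf a (by simp)).add (ih fun i hi => hf i (by simp [hi]))

lemma listProd {ι : Type*} (L : List ι) {f : ι → Ω → ℝ} (hf : ∀ i ∈ L, BM (f i)) :
    BM (fun x => (L.map (fun i => f i x)).prod) := by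
  induction L with
  | nil => simpa using const 1
  | cons a L ih =>
    simp only [List.map_cons, List.prod_cons]
    exact (hf a (by simp)).mul (ih fun i hi => hf i (by simp [hi]))

lemma integrable {f : Ω → ℝ} (hf : BM f) (μ : Measure Ω) [IsFiniteMeasure μ] : Integrable f μ := by
  obtain ⟨hf, C, hC⟩ := hf
  exact Integrable.of_bound hf.aestronglyMeasurable C (ae_of_all _ hC)

lemma memLp {f : Ω → ℝ} (hf : BM f) (μ : Measure Ω) [IsFiniteMeasure μ] : MemLp f 2 μ := by
  obtain ⟨hf, C, hC⟩ := hf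
  exact MemLp.of_bound hf.aestronglyMeasurable C (ae_of_all _ hC)

lemma indicator {s : Set Ω} (hs : MeasurableSet s) : BM (s.indicator (fun _ => (1:ℝ))) := by
  refine of01 (measurable_const.indicator hs) fun x => ?_
  by_cases h : x ∈ s <;> simp [h]

end BM

/-- `φ` is the weak limit of `f ∘ T⁻ⁿ` along the ultrafilter `𝒰`. -/
def IsLim {X : Type*} [MeasurableSpace X] (μ : Measure X) (T : X ≃ᵐ X) (𝒰 : Ultrafilter ℕ)
    (f φ : X → ℝ) : Prop :=
  Measurable f ∧ Measurable φ ∧ (∀ x, 0 ≤ f x ∧ f x ≤ 1) ∧ (∀ x, 0 ≤ φ x ∧ φ x ≤ 1) ∧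
    ∀ u : X → ℝ, MemLp u 2 μ →
      Tendsto (fun n : ℕ => ∫ x, u x * f (T.symm^[n] x) ∂μ) 𝒰 (𝓝 (∫ x, u x * φ x ∂μ))

lemma weak_limit {E : Type*} [NormedAddCommGroup E] [InnerProductSpace ℝ E] [CompleteSpace E]
    (𝒰 : Ultrafilter ℕ) (v : ℕ → E) (R : ℝ) (hv : ∀ n, ‖v n‖ ≤ R) :
    ∃ x : E, ∀ u : E, Tendsto (fun n => inner ℝ (v n) u) 𝒰 (𝓝 (inner ℝ x u)) := by
  have hc := WeakDual.isCompact_closedBall (𝕜 := ℝ) (E := E) 0 R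
  let F : ℕ → WeakDual ℝ E := fun n => StrongDual.toWeakDual (InnerProductSpace.toDual ℝ E (v n))
  obtain ⟨y, -, hy⟩ := hc.ultrafilter_le_nhds (𝒰.map F) (by
    rw [le_principal_iff, Ultrafilter.coe_map, Filter.mem_map]
    refine Filter.univ_mem' fun n => ?_
    simp only [Set.mem_preimage, F, Metric.mem_closedBall, dist_zero_right]
    show ‖InnerProductSpace.toDual ℝ E (v n)‖ ≤ R
    simpa using hv n)
  have hy' : Tendsto F 𝒰 (𝓝 y) := hy
  refine ⟨(InnerProductSpace.toDual ℝ E).symm (WeakDual.toStrongDual y), fun u => ?_⟩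
  have h := (tendsto_iff_forall_eval_tendsto_topDualPairing.1 hy') u
  have e : inner ℝ ((InnerProductSpace.toDual ℝ E).symm (WeakDual.toStrongDual y)) u
      = topDualPairing ℝ E y u := by
    rw [InnerProductSpace.toDual_symm_apply]; rfl
  rw [e]
  exact h

lemma toLp_inner {X : Type*} [MeasurableSpace X] {μ : Measure X} {a b : X → ℝ}
    (ha : MemLp a 2 μ) (hb : MemLp b 2 μ) :
    inner ℝ (ha.toLp a) (hb.toLp b) = ∫ x, b x * a x ∂μ := by
  rw [L2.inner_def]
  apply integral_congr_ae
  filter_upwards [ha.coeFn_toLp, hb.coeFn_toLp] with x h1 h2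
  rw [h1, h2]; rfl

section
variable {X : Type*} [mX : MeasurableSpace X] {μ : Measure X} [IsProbabilityMeasure μ]
  {T : X ≃ᵐ X} {𝒰 : Ultrafilter ℕ}

lemma exists_isLim (hT : MeasurePreserving T μ μ) {f : X → ℝ} (hf : Measurable f)
    (h01 : ∀ x, 0 ≤ f x ∧ f x ≤ 1) : ∃ φ, IsLim μ T 𝒰 f φ := by
  have hb := BM.of01 hf h01
  have hbn : ∀ n : ℕ, BM (fun x => f (T.symm^[n] x)) := fun n =>
    hb.comp (T.symm.measurable.iterate n)
  have hm : ∀ n : ℕ, MemLp (fun x => f (T.symm^[n] x)) 2 μ := fun n => (hbn n).memLp μ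
  obtain ⟨y, hy⟩ := weak_limit 𝒰 (fun n => (hm n).toLp _) 1 (fun n => by
    rw [Lp.norm_toLp]
    have := eLpNorm_le_of_ae_bound (p := 2) (μ := μ) (f := fun x => f (T.symm^[n] x)) (C := 1)
      (ae_of_all _ fun x => by
        rw [Real.norm_eq_abs]; exact abs_le.2 ⟨by linarith [(h01 (T.symm^[n] x)).1], (h01 _).2⟩)
    simp only [measure_univ, ENNReal.one_rpow, one_mul, ENNReal.ofReal_one] at this
    exact ENNReal.toReal_le_of_le_ofReal zero_le_one (by simpa using this))
  have hyL : MemLp y 2 μ := Lp.memLp y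
  have key : ∀ u : X → ℝ, MemLp u 2 μ →
      Tendsto (fun n : ℕ => ∫ x, u x * f (T.symm^[n] x) ∂μ) 𝒰 (𝓝 (∫ x, u x * y x ∂μ)) := by
    intro u hu
    have := hy (hu.toLp u)
    simp only [toLp_inner] at this
    have e : inner ℝ y (hu.toLp u) = ∫ x, u x * y x ∂μ := by
      conv_lhs => rw [← Lp.toLp_coeFn y hyL]
      rw [toLp_inner]
    rwa [e] at this
  have hyi : Integrable y μ := hyL.integrable (by norm_num)
  have hset : ∀ s : Set X, MeasurableSet s →
      Tendsto (fun n : ℕ => ∫ x in s, f (T.symm^[n] x) ∂μ) 𝒰 (𝓝 (∫ x in s, y x ∂μ)) := by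
    intro s hs
    have h := key _ ((BM.indicator hs).memLp μ)
    have e : ∀ g : X → ℝ, ∫ x, s.indicator (fun _ => (1:ℝ)) x * g x ∂μ = ∫ x in s, g x ∂μ := by
      intro g
      rw [← integral_indicator hs]
      congr 1; ext x
      by_cases hx : x ∈ s <;> simp [hx]
    simpa only [e] using h
  have h0 : 0 ≤ᵐ[μ] y := by
    refine ae_nonneg_of_forall_setIntegral_nonneg hyi fun s hs _ => ?_
    exact ge_of_tendsto' (hset s hs) fun n => integral_nonneg fun x => (h01 _).1
  have h1 : y ≤ᵐ[μ] fun _ => (1:ℝ) := by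
    refine ae_le_of_forall_setIntegral_le hyi (integrable_const _) fun s hs _ => ?_
    refine le_of_tendsto' (hset s hs) fun n => ?_
    exact integral_mono ((hbn n).integrable _) (integrable_const _) fun x => (h01 _).2
  let y' : X → ℝ := hyi.aestronglyMeasurable.mk y
  have hy'm : Measurable y' := hyi.aestronglyMeasurable.stronglyMeasurable_mk.measurable
  have hy' : y =ᵐ[μ] y' := hyi.aestronglyMeasurable.ae_eq_mk
  refine ⟨fun x => max 0 (min (y' x) 1), hf, by fun_prop, h01, fun x => ⟨le_max_left _ _,
    max_le zero_le_one (min_le_right _ _)⟩, fun u hu => ?_⟩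
  have e : ∫ x, u x * max 0 (min (y' x) 1) ∂μ = ∫ x, u x * y x ∂μ := by
    apply integral_congr_ae
    filter_upwards [h0, h1, hy'] with x a b c
    have a' : (0:ℝ) ≤ y x := a
    rw [← c, min_eq_left b, max_eq_right a']
  rw [e]
  exact key u hu

lemma IsLim.bm_left {f φ : X → ℝ} (h : IsLim μ T 𝒰 f φ) : BM f := BM.of01 h.1 h.2.2.1
lemma IsLim.bm_right {f φ : X → ℝ} (h : IsLim μ T 𝒰 f φ) : BM φ := BM.of01 h.2.1 h.2.2.2.1

lemma IsLim.comp_gen {f φ : X → ℝ} (h : IsLim μ T 𝒰 f φ) (R : X ≃ᵐ X)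
    (hR : MeasurePreserving R μ μ) (hc : ∀ x, R (T.symm x) = T.symm (R x)) :
    IsLim μ T 𝒰 (fun x => f (R x)) (fun x => φ (R x)) := by
  obtain ⟨h1, h2, h3, h4, h5⟩ := h
  refine ⟨h1.comp R.measurable, h2.comp R.measurable, fun x => h3 _, fun x => h4 _, fun u hu => ?_⟩
  have hR' : MeasurePreserving R.symm μ μ := hR.symm R
  have := h5 (fun x => u (R.symm x)) (hu.comp_measurePreserving hR')
  have hcn : ∀ (n : ℕ) x, R (T.symm^[n] x) = T.symm^[n] (R x) := fun n =>
    Function.Commute.iterate_right (f := R) (g := T.symm) hc n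
  have e : ∀ g : X → ℝ, ∫ x, u (R.symm x) * g x ∂μ = ∫ x, u x * g (R x) ∂μ := by
    intro g
    rw [← hR.integral_comp R.measurableEmbedding (fun x => u (R.symm x) * g x)]
    simp
  simp only [e] at this
  simpa only [hcn] using this

lemma IsLim.comp_T (hT : MeasurePreserving T μ μ) {f φ : X → ℝ} (h : IsLim μ T 𝒰 f φ) :
    IsLim μ T 𝒰 (fun x => f (T x)) (fun x => φ (T x)) := h.comp_gen T hT (by simp)

lemma IsLim.comp_symm (hT : MeasurePreserving T μ μ) {f φ : X → ℝ} (h : IsLim μ T 𝒰 f φ) :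
    IsLim μ T 𝒰 (fun x => f (T.symm x)) (fun x => φ (T.symm x)) :=
  h.comp_gen T.symm (hT.symm T) (by simp)

lemma IsLim.comp_iter (hT : MeasurePreserving T μ μ) {f φ : X → ℝ} (h : IsLim μ T 𝒰 f φ) (n : ℕ) :
    IsLim μ T 𝒰 (fun x => f (T^[n] x)) (fun x => φ (T^[n] x)) := by
  induction n with
  | zero => simpa using h
  | succ n ih =>
    have := ih.comp_T hT
    simpa only [Function.iterate_succ, Function.comp] using this

lemma IsLim.lift {W : Type*} [MeasurableSpace W] (ρ : Measure (X × W)) [IsProbabilityMeasure ρ]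
    (hρ : ρ.map Prod.fst = μ) {f φ : X → ℝ} (h : IsLim μ T 𝒰 f φ) {V : X × W → ℝ} (hV : BM V) :
    Tendsto (fun n : ℕ => ∫ p, V p * f (T.symm^[n] p.1) ∂ρ) 𝒰 (𝓝 (∫ p, V p * φ p.1 ∂ρ)) := by
  have hle : (MeasurableSpace.comap (Prod.fst : X × W → X) mX) ≤ Prod.instMeasurableSpace :=
    measurable_fst.comap_le
  obtain ⟨q, hq, hqe⟩ := (stronglyMeasurable_condExp (μ := ρ)
    (m := MeasurableSpace.comap (Prod.fst : X × W → X) mX)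
    (f := V)).exists_eq_measurable_comp
  have hmp : MeasurePreserving (Prod.fst : X × W → X) ρ μ := ⟨measurable_fst, hρ⟩
  have hqL : MemLp q 2 μ := by
    have : MemLp (q ∘ Prod.fst) 2 ρ := by
      rw [← hqe]; exact (hV.memLp ρ).condExp (by norm_num)
    rwa [← hρ, memLp_map_measure_iff hq.aestronglyMeasurable measurable_fst.aemeasurable]
  have e : ∀ k : X → ℝ, BM k → ∫ p, V p * k p.1 ∂ρ = ∫ x, q x * k x ∂μ := by
    intro k hk
    have hkm : StronglyMeasurable[MeasurableSpace.comap (Prod.fst : X × W → X) mX]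
        (fun p : X × W => k p.1) :=
      (hk.1.comp (comap_measurable Prod.fst)).stronglyMeasurable
    have h1 := condExp_mul_of_stronglyMeasurable_right (μ := ρ) hkm
      ((hV.mul (hk.comp measurable_fst)).integrable ρ) (hV.integrable ρ)
    rw [← hρ, integral_map (f := fun x => q x * k x) measurable_fst.aemeasurable
      (hq.aestronglyMeasurable.mul hk.1.aestronglyMeasurable)]
    have h2 := integral_condExp (μ := ρ) (f := fun p => V p * k p.1) hle
    rw [← h2]
    apply integral_congr_ae
    refine h1.trans ?_
    rw [hqe]
    exact ae_of_all _ fun p => rfl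
  have := h.2.2.2.2 q hqL
  rw [e φ h.bm_right]
  have e2 : ∀ n : ℕ, ∫ p, V p * f (T.symm^[n] p.1) ∂ρ = ∫ x, q x * f (T.symm^[n] x) ∂μ :=
    fun n => e (fun x => f (T.symm^[n] x)) (h.bm_left.comp (T.symm.measurable.iterate n))
  simpa only [e2] using this

end

lemma seq_zero {𝒰 : Ultrafilter ℕ} (h𝒰 : (𝒰 : Filter ℕ) ≤ atTop) (a : ℕ → ℝ) (c : ℕ → ℕ → ℝ)
    (D : ℝ) (hD : ∀ n m, |c n m| ≤ D)
    (hc : ∀ δ > 0, ∃ N : ℕ, ∀ n m, n + N ≤ m → |c n m| ≤ δ ∧ |c m n| ≤ δ)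
    (hq : ∀ J : Finset ℕ, (∑ n ∈ J, a n) ^ 2 ≤ ∑ n ∈ J, ∑ m ∈ J, c n m)
    {l : ℝ} (h : Tendsto a 𝒰 (𝓝 l)) : l = 0 := by
  by_contra hl
  have hl2 : 0 < l ^ 2 := by positivity
  have h1 : ∀ᶠ n in (𝒰 : Filter ℕ), l ^ 2 / 2 < a n * l := by
    have : Tendsto (fun n => a n * l) 𝒰 (𝓝 (l * l)) := h.mul_const l
    exact this.eventually (lt_mem_nhds (by nlinarith))
  have h2 : ∃ᶠ n in atTop, l ^ 2 / 2 < a n * l := h1.frequently.filter_mono h𝒰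
  obtain ⟨ψ, hψ, hψa⟩ := extraction_of_frequently_atTop h2
  obtain ⟨N0, hN0⟩ := hc (l ^ 2 / 8) (by positivity)
  obtain ⟨N, hN1, hN⟩ : ∃ N : ℕ, 1 ≤ N ∧ ∀ n m, n + N ≤ m → |c n m| ≤ l ^ 2 / 8 ∧ |c m n| ≤ l ^ 2 / 8 :=
    ⟨N0 + 1, by omega, fun n m hnm => hN0 n m (by omega)⟩
  let r : ℕ → ℕ := fun k => ψ (k * N)
  have hr : StrictMono r := hψ.comp (fun i j hij => Nat.mul_lt_mul_of_pos_right hij hN1)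
  have hgap : ∀ i j, i < j → r i + N ≤ r j := by
    intro i j hij
    have h3 : i * N + N ≤ j * N := by nlinarith
    have h4 : ∀ k i, ψ i + k ≤ ψ (i + k) := by
      intro k i
      induction k with
      | zero => simp
      | succ k ih =>
        have := hψ (show i + k < i + (k + 1) by omega)
        omega
    exact (h4 N (i * N)).trans (hψ.monotone h3)
  have hD0 : 0 ≤ D := (abs_nonneg _).trans (hD 0 0)
  obtain ⟨M, hM⟩ := exists_nat_gt (8 * D / l ^ 2)
  have hMpos : (0 : ℝ) < M := lt_of_le_of_lt (by positivity) hM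
  have hM' : 8 * D < M * l ^ 2 := by rwa [div_lt_iff₀ hl2] at hM
  have hJ := hq ((Finset.range M).image r)
  rw [Finset.sum_image hr.injective.injOn, Finset.sum_image hr.injective.injOn] at hJ
  simp only [Finset.sum_image hr.injective.injOn] at hJ
  have lower : M * (l ^ 2 / 2) ≤ (∑ k ∈ Finset.range M, a (r k)) * l := by
    rw [Finset.sum_mul]
    have := Finset.card_nsmul_le_sum (Finset.range M) (fun k => a (r k) * l) (l ^ 2 / 2)
      (fun k _ => (hψa _).le)
    simpa using this
  have upper : ∑ i ∈ Finset.range M, ∑ j ∈ Finset.range M, c (r i) (r j)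
      ≤ M * (D + M * (l ^ 2 / 8)) := by
    have : ∀ i ∈ Finset.range M, ∑ j ∈ Finset.range M, c (r i) (r j) ≤ D + M * (l ^ 2 / 8) := by
      intro i hi
      have : ∀ j ∈ Finset.range M, c (r i) (r j) ≤ (if i = j then D else 0) + l ^ 2 / 8 := by
        intro j _
        rcases lt_trichotomy i j with hij | hij | hij
        · have := (abs_le.1 (hN _ _ (hgap i j hij)).1).2
          simp [hij.ne, this]
        · have := (abs_le.1 (hD (r i) (r j))).2
          simp only [hij, if_true] at this ⊢
          linarith
        · have := (abs_le.1 (hN _ _ (hgap j i hij)).2).2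
          simp [hij.ne', this]
      refine (Finset.sum_le_sum this).trans ?_
      rw [Finset.sum_add_distrib]
      simp [Finset.mem_range.1 hi]
    refine (Finset.sum_le_sum this).trans ?_
    simp [mul_add]
  have l1 : (M * (l ^ 2 / 2)) ^ 2 ≤ ((∑ k ∈ Finset.range M, a (r k)) * l) ^ 2 :=
    pow_le_pow_left₀ (by positivity) lower 2
  have l2 : (M * (l ^ 2 / 2)) ^ 2 ≤ M * (D + M * (l ^ 2 / 8)) * l ^ 2 := by
    rw [mul_pow] at l1
    rw [mul_pow (∑ k ∈ Finset.range M, a (r k))] at l1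
    rw [mul_pow]
    exact l1.trans (mul_le_mul_of_nonneg_right (hJ.trans upper) hl2.le)
  have l3 : (M * l ^ 2) * (M * l ^ 2 - 8 * D) ≤ 0 := by nlinarith
  have : 0 < (M * l ^ 2) * (M * l ^ 2 - 8 * D) := mul_pos (by positivity) (by linarith)
  linarith

section
variable {X : Type*} [mX : MeasurableSpace X] {μ : Measure X} [IsProbabilityMeasure μ]
  {T : X ≃ᵐ X} {𝒰 : Ultrafilter ℕ} {W : Type*} [MeasurableSpace W]

lemma integral_lin4 {Ω : Type*} [MeasurableSpace Ω] (ρ : Measure Ω)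
    {u1 u2 u3 u4 : Ω → ℝ} (h1 : Integrable u1 ρ) (h2 : Integrable u2 ρ) (h3 : Integrable u3 ρ)
    (h4 : Integrable u4 ρ) (b c d : ℝ) :
    ∫ x, (u1 x - b * u2 x - c * u3 x + d * u4 x) ∂ρ
      = ∫ x, u1 x ∂ρ - b * ∫ x, u2 x ∂ρ - c * ∫ x, u3 x ∂ρ + d * ∫ x, u4 x ∂ρ := by
  have i2 : Integrable (fun x => b * u2 x) ρ := h2.const_mul b
  have i3 : Integrable (fun x => c * u3 x) ρ := h3.const_mul c
  have i4 : Integrable (fun x => d * u4 x) ρ := h4.const_mul d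
  have i12 : Integrable (fun x => u1 x - b * u2 x) ρ := h1.sub i2
  have i123 : Integrable (fun x => u1 x - b * u2 x - c * u3 x) ρ := i12.sub i3
  rw [integral_add i123 i4, integral_sub i12 i3, integral_sub h1 i2, integral_const_mul,
    integral_const_mul, integral_const_mul]

lemma sq_integral_le {Ω : Type*} [MeasurableSpace Ω] (ρ : Measure Ω) [IsProbabilityMeasure ρ]
    {V h : Ω → ℝ} (hV : BM V) (hh : BM h) (h1 : ∀ x, |h x| ≤ 1) :
    (∫ x, V x * h x ∂ρ) ^ 2 ≤ ∫ x, V x * V x ∂ρ := by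
  set a := ∫ x, V x * h x ∂ρ with ha
  have i1 := (hV.mul hV).integrable ρ
  have i2 := (hV.mul hh).integrable ρ
  have : 0 ≤ ∫ x, (V x * V x - 2 * a * (V x * h x) + a ^ 2) ∂ρ := by
    refine integral_nonneg fun x => ?_
    have h2 : h x ^ 2 ≤ 1 := by
      rw [sq_le_one_iff_abs_le_one]; exact h1 x
    show 0 ≤ V x * V x - 2 * a * (V x * h x) + a ^ 2
    nlinarith [sq_nonneg (V x - a * h x), mul_nonneg (sq_nonneg a) (sub_nonneg.2 h2)]
  have e := integral_lin4 ρ i1 i2 i2 (integrable_const (1:ℝ)) (2 * a) 0 (a ^ 2)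
  simp only [zero_mul, sub_zero, mul_one, integral_const, probReal_univ, one_smul, ← ha] at e
  rw [e] at this
  nlinarith

lemma qineq (hT : MeasurePreserving T μ μ) (ρ : Measure (X × W)) [IsProbabilityMeasure ρ]
    (hρ : ρ.map Prod.fst = μ) (J : Finset ℕ) {h : X → ℝ} (hh : BM h) (h1 : ∀ x, |h x| ≤ 1)
    (χ : (X → ℝ) × (X → ℝ) → ℕ → ℕ → X → ℝ)
    (L : List ((X → ℝ) × (X → ℝ))) :
    (∀ q ∈ L, IsLim μ T 𝒰 q.1 q.2) →
    (∀ q ∈ L, ∀ n m, IsLim μ T 𝒰 (fun x => q.1 (T^[n] x) * q.1 (T^[m] x)) (χ q n m)) →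
    ∀ V : ℕ → X × W → ℝ, (∀ n, BM (V n)) →
    (∑ n ∈ J, ∫ p, V n p * h p.1 * (L.map (fun q => q.2 (T^[n] p.1))).prod ∂ρ) ^ 2 ≤
      ∑ n ∈ J, ∑ m ∈ J, ∫ p, V n p * V m p * (L.map (fun q => χ q n m p.1)).prod ∂ρ := by
  induction L with
  | nil =>
    intro _ _ V hV
    have := sq_integral_le ρ (V := fun p => ∑ n ∈ J, V n p) (h := fun p => h p.1)
      (BM.sum J fun n _ => hV n) (hh.comp measurable_fst) (fun p => h1 _)
    simp only [Finset.sum_mul, Finset.mul_sum] at this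
    rw [integral_finsetSum _ fun n _ => ((hV n).mul (hh.comp measurable_fst)).integrable ρ,
      integral_finsetSum _ fun n _ =>
        (BM.sum J fun m _ => (hV m).mul (hV n)).integrable ρ] at this
    simp only [integral_finsetSum _ fun n _ => ((hV n).mul (hV _)).integrable ρ] at this
    rw [Finset.sum_comm] at this
    simpa using this
  | cons q L ih =>
    intro hL hχ V hV
    have hTn : ∀ n : ℕ, Measurable (T^[n]) := fun n => T.measurable.iterate n
    have hTs : ∀ n : ℕ, Measurable (T.symm^[n]) := fun n => T.symm.measurable.iterate n
    have hqb : BM q.1 := (hL q (by simp)).bm_left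
    have hL' : ∀ r ∈ L, IsLim μ T 𝒰 r.1 r.2 := fun r hr => hL r (by simp [hr])
    have hχ' : ∀ r ∈ L, ∀ n m,
        IsLim μ T 𝒰 (fun x => r.1 (T^[n] x) * r.1 (T^[m] x)) (χ r n m) :=
      fun r hr => hχ r (by simp [hr])
    have step := fun k : ℕ => ih hL' hχ'
      (fun n p => V n p * q.1 (T^[n] (T.symm^[k] p.1)))
      (fun n => (hV n).mul (hqb.comp ((hTn n).comp ((hTs k).comp measurable_fst))))
    refine le_of_tendsto_of_tendsto' (b := (𝒰 : Filter ℕ)) ?_ ?_ step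
    · refine Tendsto.pow (tendsto_finsetSum _ fun n _ => ?_) 2
      have b : BM (fun p : X × W => V n p * h p.1 * (L.map (fun q => q.2 (T^[n] p.1))).prod) :=
        ((hV n).mul (hh.comp measurable_fst)).mul
          (BM.listProd L (f := fun q (p : X × W) => q.2 (T^[n] p.1)) fun r hr =>
            (hL' r hr).bm_right.comp ((hTn n).comp measurable_fst))
      have := ((hL q (by simp)).comp_iter hT n).lift ρ hρ b
      convert this using 2
      · congr 1; ext p; ring
      · congr 1; ext p; simp only [List.map_cons, List.prod_cons]; ring
    · refine tendsto_finsetSum _ fun n _ => tendsto_finsetSum _ fun m _ => ?_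
      have b : BM (fun p : X × W => V n p * V m p * (L.map (fun q => χ q n m p.1)).prod) :=
        ((hV n).mul (hV m)).mul
          (BM.listProd L (f := fun q (p : X × W) => χ q n m p.1) fun r hr =>
            (hχ' r hr n m).bm_right.comp measurable_fst)
      have := (hχ q (by simp) n m).lift ρ hρ b
      convert this using 2
      · congr 1; ext p; ring
      · congr 1; ext p; simp only [List.map_cons, List.prod_cons]; ring

lemma list_prod_01 {ι : Type*} (L : List ι) (v : ι → ℝ) (h : ∀ i ∈ L, 0 ≤ v i ∧ v i ≤ 1) :
    0 ≤ (L.map v).prod ∧ (L.map v).prod ≤ 1 := by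
  induction L with
  | nil => simp
  | cons a L ih =>
    have h1 := h a (by simp)
    have h2 := ih fun i hi => h i (by simp [hi])
    simp only [List.map_cons, List.prod_cons]
    exact ⟨mul_nonneg h1.1 h2.1, mul_le_one₀ h1.2 h2.1 h2.2⟩

lemma main_claim (hT : MeasurePreserving T μ μ) (h𝒰 : (𝒰 : Filter ℕ) ≤ atTop)
    (σ : Measure W) [IsProbabilityMeasure σ] {S : W → W} (hS : MeasurePreserving S σ σ)
    (hmix : MixingMap S σ)
    (ρ : Measure (X × W)) [IsProbabilityMeasure ρ]
    (hρ : ρ.map Prod.fst = μ) (hρ2 : ρ.map Prod.snd = σ) (hinv : ρ.map (Prod.map T S) = ρ)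
    (k : ℕ) : ∀ L : List ((X → ℝ) × (X → ℝ)), L.length = k →
    (∀ q ∈ L, IsLim μ T 𝒰 q.1 q.2) → ∀ B : Set W, MeasurableSet B →
    ∫ p, B.indicator (fun _ => (1:ℝ)) p.2 * (L.map (fun q => q.2 p.1)).prod ∂ρ
      = σ.real B * ∫ x, (L.map (fun q => q.2 x)).prod ∂μ := by
  induction k with
  | zero =>
    intro L hL _ B hB
    rw [List.length_eq_zero_iff] at hL
    subst hL
    simp only [List.map_nil, List.prod_nil, mul_one]
    rw [← hρ2, ← integral_map (f := B.indicator (fun _ => (1:ℝ))) measurable_snd.aemeasurable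
      (measurable_const.indicator hB).aestronglyMeasurable, integral_indicator_const _ hB]
    simp
  | succ k ih =>
    intro L hLk hL B hB
    obtain ⟨q, L, rfl⟩ : ∃ q L', L = q :: L' := by
      cases L with
      | nil => simp at hLk
      | cons q L' => exact ⟨q, L', rfl⟩
    have hLk' : L.length = k := by simpa using hLk
    have hL' : ∀ r ∈ L, IsLim μ T 𝒰 r.1 r.2 := fun r hr => hL r (by simp [hr])
    have hq := hL q (by simp)
    have hTn : ∀ n : ℕ, Measurable (T^[n]) := fun n => T.measurable.iterate n
    have hTs : ∀ n : ℕ, Measurable (T.symm^[n]) := fun n => T.symm.measurable.iterate n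
    have hSn : ∀ n : ℕ, MeasurePreserving (S^[n]) σ σ := fun n => hS.iterate n
    set g : W → ℝ := fun w => B.indicator (fun _ => (1:ℝ)) w - σ.real B with hg
    have hgb : BM g := (BM.indicator hB).sub (BM.const _)
    have hexp : ∀ (f : (X → ℝ) × (X → ℝ)) (n m : ℕ), ∃ χ : X → ℝ, f ∈ L →
        IsLim μ T 𝒰 (fun x => f.1 (T^[n] x) * f.1 (T^[m] x)) χ := by
      intro f n m
      by_cases hf : f ∈ L
      · have h1 := ((hL' f hf).comp_iter hT n)
        have h2 := ((hL' f hf).comp_iter hT m)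
        obtain ⟨χ, hχ⟩ := exists_isLim (𝒰 := 𝒰) hT (h1.1.mul h2.1) fun x =>
          ⟨mul_nonneg (h1.2.2.1 x).1 (h2.2.2.1 x).1,
            mul_le_one₀ (h1.2.2.1 x).2 (h2.2.2.1 x).1 (h2.2.2.1 x).2⟩
        exact ⟨χ, fun _ => hχ⟩
      · exact ⟨0, fun h => absurd h hf⟩
    choose χ hχ using hexp
    set c : ℕ → ℕ → ℝ := fun n m =>
      ∫ p, g (S^[n] p.2) * g (S^[m] p.2) * (L.map (fun q => χ q n m p.1)).prod ∂ρ with hcdef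
    set a : ℕ → ℝ := fun n =>
      ∫ p, g (S^[n] p.2) * q.1 p.1 * (L.map (fun q => q.2 (T^[n] p.1))).prod ∂ρ with hadef
    have hPQ : ∀ J : Finset ℕ, (∑ n ∈ J, a n) ^ 2 ≤ ∑ n ∈ J, ∑ m ∈ J, c n m := by
      intro J
      exact qineq hT ρ hρ J hq.bm_left
        (fun x => abs_le.2 ⟨by linarith [(hq.2.2.1 x).1], (hq.2.2.1 x).2⟩) χ L hL'
        (fun r hr n m => hχ r n m hr) (fun n p => g (S^[n] p.2))
        (fun n => hgb.comp ((hSn n).measurable.comp measurable_snd))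
    have hc : ∀ n m, |c n m| ≤ |σ.real (S^[n] ⁻¹' B ∩ S^[m] ⁻¹' B) - σ.real B * σ.real B| := by
      intro n m
      have hPb : BM (fun x => (L.map (fun q => χ q n m x)).prod) :=
        BM.listProd L (f := fun q p => χ q n m p) fun r hr => (hχ r n m hr).bm_right
      have key : ∀ B' : Set W, MeasurableSet B' →
          ∫ p, B'.indicator (fun _ => (1:ℝ)) p.2 * (L.map (fun q => χ q n m p.1)).prod ∂ρ
            = σ.real B' * ∫ x, (L.map (fun q => χ q n m x)).prod ∂μ := by
        intro B' hB'
        have := ih (L.map fun q => ((fun x => q.1 (T^[n] x) * q.1 (T^[m] x)), χ q n m))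
          (by simpa using hLk') (by
            intro r hr
            obtain ⟨s, hs, rfl⟩ := List.mem_map.1 hr
            exact hχ s n m hs) B' hB'
        simpa [List.map_map, Function.comp_def] using this
      have hBn : ∀ n : ℕ, MeasurableSet (S^[n] ⁻¹' B) := fun n => (hSn n).measurable hB
      have hσ : ∀ n : ℕ, σ.real (S^[n] ⁻¹' B) = σ.real B := fun n =>
        (hSn n).measureReal_preimage hB.nullMeasurableSet
      have e : c n m = (σ.real (S^[n] ⁻¹' B ∩ S^[m] ⁻¹' B) - σ.real B * σ.real B) *
          ∫ x, (L.map (fun q => χ q n m x)).prod ∂μ := by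
        have k1 := key _ ((hBn n).inter (hBn m))
        have k2 := key _ (hBn n)
        have k3 := key _ (hBn m)
        have k4 := key _ MeasurableSet.univ
        rw [hσ] at k2 k3
        simp only [probReal_univ] at k4
        have I : ∀ B' : Set W, MeasurableSet B' → Integrable (fun p : X × W =>
          B'.indicator (fun _ => (1:ℝ)) p.2 * (L.map (fun q => χ q n m p.1)).prod) ρ :=
          fun B' hB' => (((BM.indicator hB').comp measurable_snd).mul
            (hPb.comp measurable_fst)).integrable ρ
        have : c n m = ∫ p, ((((S^[n] ⁻¹' B ∩ S^[m] ⁻¹' B).indicator (fun _ => (1:ℝ)) p.2 *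
            (L.map (fun q => χ q n m p.1)).prod
            - σ.real B * ((S^[n] ⁻¹' B).indicator (fun _ => (1:ℝ)) p.2 *
            (L.map (fun q => χ q n m p.1)).prod))
            - σ.real B * ((S^[m] ⁻¹' B).indicator (fun _ => (1:ℝ)) p.2 *
            (L.map (fun q => χ q n m p.1)).prod))
            + σ.real B * σ.real B * ((Set.univ).indicator (fun _ => (1:ℝ)) p.2 *
            (L.map (fun q => χ q n m p.1)).prod)) ∂ρ := by
          simp only [hcdef]
          congr 1; ext p
          simp only [hg]
          by_cases h1 : S^[n] p.2 ∈ B <;> by_cases h2 : S^[m] p.2 ∈ B <;>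
            simp [h1, h2, Set.indicator] <;> ring
        rw [this, integral_lin4 ρ (I _ ((hBn n).inter (hBn m))) (I _ (hBn n)) (I _ (hBn m))
          (I _ MeasurableSet.univ), k1, k2, k3, k4]
        ring
      rw [e, abs_mul]
      have h01 := fun x => list_prod_01 L (fun q => χ q n m x) fun r hr => (hχ r n m hr).2.2.2.1 x
      have p0 : 0 ≤ ∫ x, (L.map (fun q => χ q n m x)).prod ∂μ :=
        integral_nonneg fun x => (h01 x).1
      have p1 : ∫ x, (L.map (fun q => χ q n m x)).prod ∂μ ≤ 1 := by
        have := integral_mono (hPb.integrable μ) (integrable_const (1:ℝ)) fun x => (h01 x).2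
        simpa using this
      rw [abs_of_nonneg p0]
      exact mul_le_of_le_one_right (abs_nonneg _) p1
    have hlim : Tendsto a 𝒰 (𝓝 (∫ p, g p.2 * (L.map (fun q => q.2 p.1)).prod * q.2 p.1 ∂ρ)) := by
      have hFb : BM (fun x => (L.map (fun q => q.2 x)).prod) :=
        BM.listProd L (f := fun q p => q.2 p) fun r hr => (hL' r hr).bm_right
      have := hq.lift ρ hρ (V := fun p => g p.2 * (L.map (fun q => q.2 p.1)).prod)
        ((hgb.comp measurable_snd).mul (hFb.comp measurable_fst))
      convert this using 2 with n
      have hR : MeasurePreserving (Prod.map T S) ρ ρ :=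
        ⟨T.measurable.prodMap hS.measurable, hinv⟩
      have hRn := hR.iterate n
      rw [Prod.map_iterate] at hRn
      have e := integral_map (μ := ρ) (f := fun p : X × W =>
        g p.2 * (L.map (fun q => q.2 p.1)).prod * q.1 (T.symm^[n] p.1))
        hRn.measurable.aemeasurable ((((hgb.comp measurable_snd).mul (hFb.comp measurable_fst)).mul
          (hq.bm_left.comp ((hTs n).comp measurable_fst))).1.aestronglyMeasurable)
      rw [hRn.map_eq] at e
      rw [e]
      simp only [hadef, Prod.map_fst, Prod.map_snd]
      congr 1; ext p
      have : T.symm^[n] (T^[n] p.1) = p.1 :=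
        (Function.LeftInverse.iterate T.symm_apply_apply n) p.1
      rw [this]; ring
    have hz := seq_zero h𝒰 a c 1 (fun n m => (hc n m).trans ?_) ?_ hPQ hlim
    · have hFb : BM (fun x => (L.map (fun q => q.2 x)).prod * q.2 x) :=
        (BM.listProd L (f := fun q p => q.2 p) fun r hr => (hL' r hr).bm_right).mul hq.bm_right
      have e1 : ∫ p, g p.2 * (L.map (fun q => q.2 p.1)).prod * q.2 p.1 ∂ρ
          = ∫ p, B.indicator (fun _ => (1:ℝ)) p.2 * ((L.map (fun q => q.2 p.1)).prod * q.2 p.1) ∂ρ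
          - σ.real B * ∫ p, ((L.map (fun q => q.2 p.1)).prod * q.2 p.1) ∂ρ := by
        rw [← integral_const_mul, ← integral_sub]
        · congr 1; ext p; simp only [hg]; ring
        · exact (((BM.indicator hB).comp measurable_snd).mul (hFb.comp measurable_fst)).integrable ρ
        · exact ((hFb.comp measurable_fst).integrable ρ).const_mul _
      have e2 : ∫ p, ((L.map (fun q => q.2 p.1)).prod * q.2 p.1) ∂ρ
          = ∫ x, ((L.map (fun q => q.2 x)).prod * q.2 x) ∂μ := by
        rw [← hρ, integral_map (f := fun x => (L.map (fun q => q.2 x)).prod * q.2 x)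
          measurable_fst.aemeasurable hFb.1.aestronglyMeasurable]
      rw [e1, e2, sub_eq_zero] at hz
      simp only [List.map_cons, List.prod_cons]
      simpa only [mul_comm] using hz
    · have a1 : 0 ≤ σ.real (S^[n] ⁻¹' B ∩ S^[m] ⁻¹' B) := measureReal_nonneg
      have a2 : σ.real (S^[n] ⁻¹' B ∩ S^[m] ⁻¹' B) ≤ 1 := measureReal_le_one
      have a3 : 0 ≤ σ.real B := measureReal_nonneg
      have a4 : σ.real B ≤ 1 := measureReal_le_one
      rw [abs_le]; constructor <;> nlinarith
    · intro δ hδ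
      have hm := (ENNReal.tendsto_toReal (by finiteness)).comp (hmix B B hB hB)
      rw [ENNReal.toReal_mul] at hm
      obtain ⟨N, hN⟩ := Metric.tendsto_atTop.1 hm δ hδ
      refine ⟨N, fun n m hnm => ?_⟩
      obtain ⟨j, rfl⟩ := Nat.exists_eq_add_of_le (show n ≤ m by omega)
      have hj := (hN j (by omega)).le
      rw [Real.dist_eq] at hj
      have e : σ.real (S^[n] ⁻¹' B ∩ S^[n + j] ⁻¹' B) = σ.real (S^[j] ⁻¹' B ∩ B) := by
        have : S^[n] ⁻¹' B ∩ S^[n + j] ⁻¹' B = S^[n] ⁻¹' (S^[j] ⁻¹' B ∩ B) := by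
          ext w
          simp only [Set.mem_inter_iff, Set.mem_preimage, add_comm n j, Function.iterate_add_apply]
          tauto
        rw [this]
        exact (hSn n).measureReal_preimage
          (((hSn j).measurable hB).inter hB).nullMeasurableSet
      constructor
      · refine (hc _ _).trans ?_
        rw [e]; exact hj
      · refine (hc _ _).trans ?_
        rw [Set.inter_comm, e]; exact hj

end

section
variable {X : Type*} [mX : MeasurableSpace X] {μ : Measure X} [IsProbabilityMeasure μ]
  {T : X ≃ᵐ X} {𝒰 : Ultrafilter ℕ} {W : Type*} [MeasurableSpace W]

/-- coordinate functions -/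
noncomputable def coordB (k : ℤ) : BoundedContinuousFunction (ℤ → unitInterval) ℝ :=
  BoundedContinuousFunction.mkOfCompact ⟨fun z => (z k : ℝ), by fun_prop⟩

lemma coordB_apply (k : ℤ) (z : ℤ → unitInterval) : coordB k z = (z k : ℝ) := rfl

lemma coordB_list (K : List ℤ) (z : ℤ → unitInterval) :
    ((K.map coordB).prod : BoundedContinuousFunction (ℤ → unitInterval) ℝ) z
      = (K.map (fun k => (z k : ℝ))).prod := by
  induction K with
  | nil => simp
  | cons a K ih => simp [ih, coordB_apply]

lemma measure_ext_coord (P P' : Measure (ℤ → unitInterval)) [IsFiniteMeasure P] [IsFiniteMeasure P']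
    (h : ∀ K : List ℤ, ∫ z, (K.map (fun k => (z k : ℝ))).prod ∂P
      = ∫ z, (K.map (fun k => (z k : ℝ))).prod ∂P') : P = P' := by
  let A : StarSubalgebra ℝ (BoundedContinuousFunction (ℤ → unitInterval) ℝ) :=
    StarAlgebra.adjoin ℝ (Set.range coordB)
  refine ext_of_forall_mem_subalgebra_integral_eq_of_polish (𝕜 := ℝ) (A := A) ?_ ?_
  · intro x y hxy
    obtain ⟨k, hk⟩ := Function.ne_iff.1 hxy
    refine ⟨_, ⟨(coordB k).toContinuousMapStarₐ ℝ, ?_, rfl⟩, ?_⟩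
    · exact ⟨coordB k, StarAlgebra.subset_adjoin ℝ _ ⟨k, rfl⟩, rfl⟩
    · intro he
      exact hk (Subtype.ext he)
  · intro g hg
    have hg' : g ∈ Submodule.span ℝ ((Submonoid.closure
        (Set.range coordB ∪ star (Set.range coordB)) :
        Set (BoundedContinuousFunction (ℤ → unitInterval) ℝ))) := by
      rw [← StarAlgebra.adjoin_eq_span]; exact hg
    induction hg' using Submodule.span_induction with
    | mem x hx =>
      obtain ⟨l, hl, rfl⟩ := Submonoid.exists_list_of_mem_closure hx
      have : ∀ y ∈ l, y ∈ Set.range coordB := by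
        intro y hy
        rcases hl y hy with h1 | h1
        · exact h1
        · obtain ⟨k, hk⟩ := h1
          refine ⟨k, ?_⟩
          rw [hk]
          ext z; simp
      obtain ⟨K, rfl⟩ : ∃ K : List ℤ, K.map coordB = l := by
        have : l ∈ Set.range (List.map coordB) := by
          rw [Set.range_list_map]; exact this
        exact this
      simpa only [coordB_list] using h K
    | zero => simp
    | add x y _ _ hx hy =>
      have hx' := hx (by
        show x ∈ Subalgebra.toSubmodule A.toSubalgebra
        rw [StarAlgebra.adjoin_eq_span]; assumption)
      have hy' := hy (by
        show y ∈ Subalgebra.toSubmodule A.toSubalgebra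
        rw [StarAlgebra.adjoin_eq_span]; assumption)
      simp only [BoundedContinuousFunction.coe_add, Pi.add_apply]
      rw [integral_add (x.integrable _) (y.integrable _),
        integral_add (x.integrable _) (y.integrable _), hx', hy']
    | smul c x _ hx =>
      have hx' := hx (by
        show x ∈ Subalgebra.toSubmodule A.toSubalgebra
        rw [StarAlgebra.adjoin_eq_span]; assumption)
      simp only [BoundedContinuousFunction.coe_smul]
      rw [integral_smul, integral_smul, hx']

lemma factor_indep (hT : MeasurePreserving T μ μ) (h𝒰 : (𝒰 : Filter ℕ) ≤ atTop)
    (σ : Measure W) [IsProbabilityMeasure σ] {S : W → W} (hS : MeasurePreserving S σ σ)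
    (hmix : MixingMap S σ)
    (ρ : Measure (X × W)) [IsProbabilityMeasure ρ]
    (hρ : ρ.map Prod.fst = μ) (hρ2 : ρ.map Prod.snd = σ) (hinv : ρ.map (Prod.map T S) = ρ)
    {Θ : X → ℤ → unitInterval} (hΘ : Measurable Θ)
    (hlim : ∀ k, ∃ f, IsLim μ T 𝒰 f (fun x => (Θ x k : ℝ)))
    {E : Set (ℤ → unitInterval)} (hE : MeasurableSet E) {B : Set W} (hB : MeasurableSet B) :
    ρ ((Θ ⁻¹' E) ×ˢ B) = μ (Θ ⁻¹' E) * σ B := by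
  choose f hf using hlim
  have hΘ1 : Measurable (fun p : X × W => Θ p.1) := hΘ.comp measurable_fst
  have hB' : MeasurableSet (Prod.snd ⁻¹' B : Set (X × W)) := measurable_snd hB
  have key : (ρ.restrict (Prod.snd ⁻¹' B)).map (fun p => Θ p.1) = σ B • μ.map Θ := by
    have : IsFiniteMeasure (σ B • μ.map Θ) := Measure.smul_finite _ (by finiteness)
    refine measure_ext_coord _ _ fun K => ?_
    have hm : Measurable (fun z : ℤ → unitInterval => (K.map (fun k => (z k : ℝ))).prod) :=
      (BM.listProd K (f := fun k (z : ℤ → unitInterval) => (z k : ℝ)) fun k _ =>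
        BM.of01 (by fun_prop) fun z => (z k).2).1
    rw [integral_map hΘ1.aemeasurable hm.aestronglyMeasurable, integral_smul_measure,
      integral_map hΘ.aemeasurable hm.aestronglyMeasurable, ← integral_indicator hB']
    have := main_claim hT h𝒰 σ hS hmix ρ hρ hρ2 hinv K.length
      (K.map fun k => (f k, fun x => (Θ x k : ℝ))) (by simp) (by
        intro r hr
        obtain ⟨s, hs, rfl⟩ := List.mem_map.1 hr
        exact hf s) B hB
    simp only [List.map_map, Function.comp_def] at this
    rw [smul_eq_mul]
    refine Eq.trans ?_ this
    congr 1; ext p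
    by_cases h : p.2 ∈ B <;> simp [h, Set.indicator]
  have := congrArg (fun m => m E) key
  simp only [Measure.smul_apply, smul_eq_mul] at this
  rw [Measure.map_apply hΘ1 hE, Measure.map_apply hΘ hE, Measure.restrict_apply (hΘ1 hE)] at this
  rw [mul_comm, ← this]
  congr 1

end

lemma extension_joining {X Z W : Type*} [MeasurableSpace X] [StandardBorelSpace X]
    [MeasurableSpace Z] [MeasurableSpace W]
    (μ : Measure X) [IsProbabilityMeasure μ] (T : X ≃ᵐ X) (hT : MeasurePreserving T μ μ)
    {Θ : X → Z} (hΘ : Measurable Θ) (s : Z ≃ᵐ Z) (hs : ∀ x, Θ (T x) = s (Θ x))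
    (σ : Measure W) [IsProbabilityMeasure σ] {S : W → W} (hS : Measurable S)
    (π : Measure (Z × W)) [IsProbabilityMeasure π] (h1 : π.map Prod.fst = μ.map Θ)
    (h2 : π.map Prod.snd = σ) (hinv : π.map (Prod.map s S) = π) :
    ∃ ρ : Measure (X × W), IsProbabilityMeasure ρ ∧ ρ.map Prod.fst = μ ∧ ρ.map Prod.snd = σ ∧
      ρ.map (Prod.map T S) = ρ ∧ ∀ (E : Set Z) (B : Set W), MeasurableSet E → MeasurableSet B →
        ρ ((Θ ⁻¹' E) ×ˢ B) = π (E ×ˢ B) := by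
  have : Nonempty X := nonempty_of_isProbabilityMeasure μ
  have : IsProbabilityMeasure (μ.map Θ) := Measure.isProbabilityMeasure_map hΘ.aemeasurable
  let κ : ProbabilityTheory.Kernel Z X := ProbabilityTheory.condDistrib id Θ μ
  have hκm : ∀ A : Set X, MeasurableSet A → Measurable (fun z => κ z A) := fun A hA =>
    ProbabilityTheory.Kernel.measurable_coe κ hA
  have K1 : ∀ (A : Set X) (E : Set Z), MeasurableSet A → MeasurableSet E →
      ∫⁻ z in E, κ z A ∂(μ.map Θ) = μ (Θ ⁻¹' E ∩ A) := by
    intro A E hA hE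
    have : (μ.map Θ).compProd κ = μ.map fun a => (Θ a, id a) :=
      ProbabilityTheory.compProd_map_condDistrib (X := Θ) (Y := (id : X → X)) (μ := μ)
      aemeasurable_id
    rw [← Measure.compProd_apply_prod hE hA, this,
      Measure.map_apply (hΘ.prodMk measurable_id) (hE.prod hA)]
    rfl
  have K2 : ∀ E : Set Z, MeasurableSet E →
      (fun z => κ z (Θ ⁻¹' E)) =ᵐ[μ.map Θ] E.indicator (fun _ => 1) := by
    intro E hE
    refine ae_eq_of_forall_setLIntegral_eq_of_sigmaFinite (hκm _ (hΘ hE))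
      (measurable_const.indicator hE) fun F hF _ => ?_
    rw [K1 _ _ (hΘ hE) hF, lintegral_indicator_const hE, one_mul, Measure.restrict_apply hE,
      Measure.map_apply hΘ (hE.inter hF), Set.preimage_inter, Set.inter_comm]
  have hsθ : MeasurePreserving s (μ.map Θ) (μ.map Θ) := by
    refine ⟨s.measurable, ?_⟩
    rw [Measure.map_map s.measurable hΘ]
    have : s ∘ Θ = Θ ∘ T := by ext x; exact (hs x).symm
    rw [this, ← Measure.map_map hΘ T.measurable, hT.map_eq]
  have K3 : ∀ A : Set X, MeasurableSet A →
      (fun z => κ z (T ⁻¹' A)) =ᵐ[μ.map Θ] (fun z => κ (s z) A) := by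
    intro A hA
    refine ae_eq_of_forall_setLIntegral_eq_of_sigmaFinite (hκm _ (T.measurable hA))
      ((hκm A hA).comp s.measurable) fun F hF _ => ?_
    have hF' : MeasurableSet (s.symm ⁻¹' F) := s.symm.measurable hF
    have e : F = s ⁻¹' (s.symm ⁻¹' F) := by ext z; simp
    have e1 : ∫⁻ z in F, κ (s z) A ∂(μ.map Θ) = ∫⁻ z in s.symm ⁻¹' F, κ z A ∂(μ.map Θ) := by
      conv_lhs => rw [e]
      exact hsθ.setLIntegral_comp_preimage hF' (hκm A hA)
    rw [e1, K1 _ _ hA hF', K1 _ _ (T.measurable hA) hF,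
      ← hT.measure_preimage ((hΘ hF').inter hA).nullMeasurableSet]
    congr 1
    ext x; simp [hs]
  have hfst : MeasurePreserving (Prod.fst : Z × W → Z) π (μ.map Θ) := ⟨measurable_fst, h1⟩
  let η : ProbabilityTheory.Kernel (Z × W) X := κ.comap Prod.fst measurable_fst
  have hm : Measurable (fun q : (Z × W) × X => (q.2, q.1.2)) := by fun_prop
  have hρ : ∀ (A : Set X) (B : Set W), MeasurableSet A → MeasurableSet B →
      ((π.compProd η).map (fun q => (q.2, q.1.2))) (A ×ˢ B)
        = ∫⁻ p in Prod.snd ⁻¹' B, κ p.1 A ∂π := by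
    intro A B hA hB
    rw [Measure.map_apply hm (hA.prod hB)]
    have : (fun q : (Z × W) × X => (q.2, q.1.2)) ⁻¹' (A ×ˢ B) = (Prod.snd ⁻¹' B) ×ˢ A := by
      ext q; simp [and_comm]
    rw [this, Measure.compProd_apply_prod (measurable_snd hB) hA]
    rfl
  have hprob : IsProbabilityMeasure ((π.compProd η).map (fun q => (q.2, q.1.2))) :=
    Measure.isProbabilityMeasure_map hm.aemeasurable
  have hTS : Measurable (Prod.map T S) := T.measurable.prodMap hS
  refine ⟨(π.compProd η).map (fun q => (q.2, q.1.2)), hprob, ?_, ?_, ?_, ?_⟩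
  · ext A hA
    rw [Measure.map_apply measurable_fst hA, ← Set.prod_univ, hρ _ _ hA MeasurableSet.univ,
      Set.preimage_univ, Measure.restrict_univ,
      hfst.lintegral_comp (f := fun z => κ z A) (hκm A hA), ← setLIntegral_univ,
      K1 _ _ hA MeasurableSet.univ]
    simp
  · ext B hB
    rw [Measure.map_apply measurable_snd hB, ← Set.univ_prod, hρ _ _ MeasurableSet.univ hB]
    simp [← h2, Measure.map_apply measurable_snd hB]
  · have : IsProbabilityMeasure
        (((π.compProd η).map (fun q => (q.2, q.1.2))).map (Prod.map T S)) :=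
      Measure.isProbabilityMeasure_map hTS.aemeasurable
    refine Measure.ext_prod fun {A B} hA hB => ?_
    rw [Measure.map_apply hTS (hA.prod hB)]
    have e0 : Prod.map T S ⁻¹' (A ×ˢ B) = (T ⁻¹' A) ×ˢ (S ⁻¹' B) := by
      ext p; simp
    rw [e0, hρ _ _ (T.measurable hA) (hS hB), hρ _ _ hA hB]
    have e1 : (fun p : Z × W => κ p.1 (T ⁻¹' A)) =ᵐ[π] fun p => κ (s p.1) A :=
      hfst.quasiMeasurePreserving.ae_eq_comp (K3 A hA)
    rw [lintegral_congr_ae (ae_restrict_of_ae e1)]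
    have hsS : MeasurePreserving (Prod.map s S) π π := ⟨s.measurable.prodMap hS, hinv⟩
    exact hsS.setLIntegral_comp_preimage (s := Prod.snd ⁻¹' B) (f := fun p => κ p.1 A)
      (measurable_snd hB) ((hκm A hA).comp measurable_fst)
  · intro E B hE hB
    rw [hρ _ _ (hΘ hE) hB]
    have : (fun p : Z × W => κ p.1 (Θ ⁻¹' E)) =ᵐ[π] fun p => E.indicator (fun _ => 1) p.1 :=
      hfst.quasiMeasurePreserving.ae_eq_comp (K2 E hE)
    rw [lintegral_congr_ae (ae_restrict_of_ae this)]
    have e : (fun p : Z × W => E.indicator (fun _ => (1 : ENNReal)) p.1)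
        = (Prod.fst ⁻¹' E).indicator (fun _ => 1) := by
      ext p
      by_cases hp : p.1 ∈ E <;> simp [hp]
    rw [e, lintegral_indicator_const (measurable_fst hE), one_mul,
      Measure.restrict_apply (measurable_fst hE)]
    rfl

section
variable {X : Type*} [mX : MeasurableSpace X] {μ : Measure X} [IsProbabilityMeasure μ]
  {T : X ≃ᵐ X} {𝒰 : Ultrafilter ℕ}

lemma exists_ultra {T : X → X} (h : ¬ MixingMap T μ) :
    ∃ 𝒰 : Ultrafilter ℕ, (𝒰 : Filter ℕ) ≤ atTop ∧ ∃ A B : Set X, MeasurableSet A ∧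
      MeasurableSet B ∧ ¬ Tendsto (fun n : ℕ => μ ((T^[n]) ⁻¹' A ∩ B)) 𝒰 (𝓝 (μ A * μ B)) := by
  unfold MixingMap at h
  push Not at h
  obtain ⟨A, B, hA, hB, h⟩ := h
  rw [not_tendsto_iff_exists_frequently_notMem] at h
  obtain ⟨s, hs, hfr⟩ := h
  have hne : NeBot (atTop ⊓ 𝓟 {n : ℕ | μ ((T^[n]) ⁻¹' A ∩ B) ∉ s}) :=
    frequently_mem_iff_neBot.1 hfr
  have hle := Ultrafilter.of_le (atTop ⊓ 𝓟 {n : ℕ | μ ((T^[n]) ⁻¹' A ∩ B) ∉ s})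
  refine ⟨Ultrafilter.of _, hle.trans inf_le_left, A, B, hA, hB, fun ht => ?_⟩
  have h1 := Filter.mem_map.1 (ht hs)
  have h2 := le_principal_iff.1 (hle.trans inf_le_right)
  obtain ⟨n, hn1, hn2⟩ := (Filter.nonempty_of_mem (Filter.inter_mem h1 h2))
  exact hn2 hn1

lemma not_const (hT : MeasurePreserving T μ μ) {A B : Set X} (hA : MeasurableSet A)
    (hB : MeasurableSet B) {φ : X → ℝ} (h : IsLim μ T 𝒰 (B.indicator (fun _ => (1:ℝ))) φ)
    (hn : ¬ Tendsto (fun n : ℕ => μ ((T^[n]) ⁻¹' A ∩ B)) 𝒰 (𝓝 (μ A * μ B))) (c : ℝ)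
    (hc : φ =ᵐ[μ] fun _ => c) : False := by
  have gen : ∀ A : Set X, MeasurableSet A →
      Tendsto (fun n : ℕ => μ.real ((T^[n]) ⁻¹' A ∩ B)) 𝒰 (𝓝 (μ.real A * c)) := by
    intro A hA
    have := h.2.2.2.2 _ ((BM.indicator hA).memLp μ)
    have e1 : ∫ x, A.indicator (fun _ => (1:ℝ)) x * φ x ∂μ = μ.real A * c := by
      have : (fun x => A.indicator (fun _ => (1:ℝ)) x * φ x) =ᵐ[μ]
          fun x => A.indicator (fun _ => (1:ℝ)) x * c := by
        filter_upwards [hc] with x hx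
        rw [hx]
      rw [integral_congr_ae this, integral_mul_const, integral_indicator_const _ hA]
      simp
    rw [e1] at this
    convert this using 2 with n
    have hTn : MeasurePreserving (T^[n]) μ μ := hT.iterate n
    have hm : Measurable (fun x => A.indicator (fun _ => (1:ℝ)) x *
        B.indicator (fun _ => (1:ℝ)) (T.symm^[n] x)) :=
      ((BM.indicator hA).mul ((BM.indicator hB).comp (T.symm.measurable.iterate n))).1
    have e2 := integral_map (μ := μ) hTn.measurable.aemeasurable hm.aestronglyMeasurable
    rw [hTn.map_eq] at e2
    rw [e2]
    have hM : MeasurableSet ((T^[n]) ⁻¹' A ∩ B) := (hTn.measurable hA).inter hB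
    have e3 := integral_indicator_const (μ := μ) (1:ℝ) hM
    simp only [smul_eq_mul, mul_one] at e3
    rw [← e3]
    congr 1; ext x
    have : T.symm^[n] (T^[n] x) = x :=
      (Function.LeftInverse.iterate T.symm_apply_apply n) x
    rw [this]
    by_cases h1 : T^[n] x ∈ A <;> by_cases h2 : x ∈ B <;> simp [h1, h2, Set.indicator]
  have hu := gen Set.univ MeasurableSet.univ
  simp only [Set.preimage_univ, Set.univ_inter, probReal_univ, one_mul] at hu
  have hcB : μ.real B = c := tendsto_nhds_unique tendsto_const_nhds hu
  have hAB := gen A hA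
  rw [← hcB] at hAB
  apply hn
  rw [← ENNReal.tendsto_toReal_iff (fun _ => by finiteness) (by finiteness), ENNReal.toReal_mul]
  exact hAB

lemma exists_set_of_not_const {φ : X → ℝ} (hφ : Measurable φ)
    (h : ∀ c : ℝ, ¬ φ =ᵐ[μ] fun _ => c) :
    ∃ E : Set ℝ, MeasurableSet E ∧ 0 < μ (φ ⁻¹' E) ∧ μ (φ ⁻¹' E) < 1 := by
  by_contra hcon
  push Not at hcon
  obtain ⟨c, hc⟩ := Filter.exists_eventuallyEq_const_of_forall_separating (l := ae μ) (f := φ)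
    MeasurableSet (fun U hU => by
      rcases eq_or_ne (μ (φ ⁻¹' U)) 0 with h0 | h0
      · right
        exact measure_eq_zero_iff_ae_notMem.1 h0
      · left
        have h1 := hcon U hU (pos_iff_ne_zero.2 h0)
        have h2 : μ (φ ⁻¹' U) = 1 := le_antisymm prob_le_one h1
        exact (mem_ae_iff_prob_eq_one (hφ hU)).2 h2)
  exact h c hc

/-- the shift -/
def shiftZ : (ℤ → unitInterval) ≃ᵐ (ℤ → unitInterval) where
  toFun z k := z (k + 1)
  invFun z k := z (k - 1)
  left_inv z := by ext k; simp
  right_inv z := by ext k; simp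
  measurable_toFun := by
    show Measurable fun (z : ℤ → unitInterval) (k : ℤ) => z (k + 1)
    fun_prop
  measurable_invFun := by
    show Measurable fun (z : ℤ → unitInterval) (k : ℤ) => z (k - 1)
    fun_prop

lemma IsLim.zpow (hT : MeasurePreserving T μ μ) {f φ : X → ℝ} (h : IsLim μ T 𝒰 f φ) (k : ℤ) :
    IsLim μ T 𝒰 (fun x => f (((T.toEquiv : Equiv.Perm X) ^ k) x))
      (fun x => φ (((T.toEquiv : Equiv.Perm X) ^ k) x)) := by
  induction k using Int.induction_on with
  | zero => simpa using h
  | succ n ih =>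
    have := ih.comp_T hT
    have e : ∀ x, ((T.toEquiv : Equiv.Perm X) ^ ((n : ℤ) + 1)) x
        = ((T.toEquiv : Equiv.Perm X) ^ (n : ℤ)) (T x) := fun x => by
      rw [zpow_add_one]; rfl
    simpa only [e] using this
  | pred n ih =>
    have := ih.comp_symm hT
    have e : ∀ x, ((T.toEquiv : Equiv.Perm X) ^ (-(n : ℤ) - 1)) x
        = ((T.toEquiv : Equiv.Perm X) ^ (-(n : ℤ))) (T.symm x) := fun x => by
      rw [zpow_sub_one]; rfl
    simpa only [e] using this

end

lemma push_joining {X Z W : Type*} [m1 : MeasurableSpace X] [MeasurableSpace Z]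
    [mW : MeasurableSpace W] {Θ : X → Z} (hΘ : Measurable Θ) {T : X → X} {S : W → W} {s : Z → Z}
    (hs : ∀ x, Θ (T x) = s (Θ x)) (hsm : Measurable s) (hTm : Measurable T) (hS : Measurable S)
    (ν : Measure X) (σ : Measure W) (ρ : Measure (X × W))
    (hj : IsFactorJoining m1 mW ν σ T S ρ) :
    IsProbabilityMeasure (ρ.map (Prod.map Θ id)) ∧
      (ρ.map (Prod.map Θ (id : W → W))).map Prod.fst = ν.map Θ ∧
      (ρ.map (Prod.map Θ (id : W → W))).map Prod.snd = σ ∧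
      (ρ.map (Prod.map Θ (id : W → W))).map (Prod.map s S) = ρ.map (Prod.map Θ id) := by
  obtain ⟨h0, h1, h2, h3⟩ := hj
  have hP : Measurable (Prod.map Θ (id : W → W)) := hΘ.prodMap measurable_id
  refine ⟨Measure.isProbabilityMeasure_map hP.aemeasurable, ?_, ?_, ?_⟩
  · rw [Measure.map_map measurable_fst hP, ← h1, Measure.map_map hΘ measurable_fst]
    rfl
  · rw [Measure.map_map measurable_snd hP, ← h2]
    rfl
  · conv_rhs => rw [← h3]
    rw [Measure.map_map (hsm.prodMap hS) hP]
    erw [Measure.map_map hP (hTm.prodMap hS)]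
    congr 1
    ext p
    · simp [hs]
    · simp

lemma finish_prod {X Z W : Type*} [m1 : MeasurableSpace X] [mZ : MeasurableSpace Z]
    [mW : MeasurableSpace W] {Θ : X → Z} (hm : m1 = MeasurableSpace.comap Θ mZ)
    (ν : Measure X) (σ : Measure W) [IsProbabilityMeasure ν] [IsProbabilityMeasure σ]
    (ρ : Measure (X × W))
    (h : ∀ (E : Set Z) (B : Set W), MeasurableSet E → MeasurableSet B →
      (ρ.map (Prod.map Θ (id : W → W))) (E ×ˢ B) = ν (Θ ⁻¹' E) * σ B) :
    ρ = ν.prod σ := by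
  have hΘ : Measurable Θ := by
    rw [measurable_iff_comap_le, hm]
  refine (Measure.prod_eq fun A B hA hB => ?_).symm
  rw [hm] at hA
  obtain ⟨E, hE, rfl⟩ := hA
  rw [← h E B hE hB, Measure.map_apply (hΘ.prodMap measurable_id) (hE.prod hB)]
  rfl

lemma trim_map {X Z : Type*} {m1 mX : MeasurableSpace X} [MeasurableSpace Z] (μ : @Measure X mX)
    (hm : m1 ≤ mX) {Θ : X → Z} (hΘ : Measurable[m1] Θ) :
    @Measure.map X Z m1 _ Θ (μ.trim hm) = @Measure.map X Z mX _ Θ μ := by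
  ext E hE
  rw [@Measure.map_apply X Z m1 _ (μ.trim hm) Θ hΘ E hE,
    @Measure.map_apply X Z mX _ μ Θ (hΘ.mono hm le_rfl) E hE,
    trim_measurableSet_eq hm (hΘ hE)]

/-- **(Parreau).**  Let `T` be an ergodic automorphism of a standard probability space.
If `T` is not mixing, then `T` has a non-trivial factor (a non-trivial invariant
sub-σ-algebra `𝒞`) which is disjoint, in the sense of Furstenberg, from every mixing
automorphism: the only joining of the factor system with any mixing system is the product
measure. -/
theorem parreau_nonmixing_factor {X : Type u} [mX : MeasurableSpace X]
    [StandardBorelSpace X] (μ : Measure X) [IsProbabilityMeasure μ]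
    (T : X ≃ᵐ X) (hT : MeasurePreserving T μ μ) (hErg : Ergodic T μ)
    (hNotMix : ¬ MixingMap T μ) :
    ∃ (𝒞 : MeasurableSpace X) (h𝒞 : 𝒞 ≤ mX),
      (∀ s : Set X, MeasurableSet[𝒞] s →
        MeasurableSet[𝒞] (⇑T ⁻¹' s) ∧ MeasurableSet[𝒞] (⇑(@MeasurableEquiv.symm X X mX mX T) ⁻¹' s)) ∧
      (∃ s : Set X, MeasurableSet[𝒞] s ∧ 0 < μ s ∧ μ s < 1) ∧
      (∀ (W : Type u) [mW : MeasurableSpace W] (σ : Measure W),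
        IsProbabilityMeasure σ → ∀ S : W → W, Measurable S → MeasurePreserving S σ σ →
          MixingMap S σ →
          ∀ ρ : @Measure (X × W) (𝒞.prod mW), IsFactorJoining 𝒞 mW (μ.trim h𝒞) σ (⇑T) S ρ →
            ρ = @Measure.prod _ _ 𝒞 mW (μ.trim h𝒞) σ) := by
  obtain ⟨𝒰, h𝒰, A, B, hA, hB, hnt⟩ := exists_ultra hNotMix
  obtain ⟨φ, hφ⟩ := exists_isLim (𝒰 := 𝒰) (f := B.indicator (fun _ => (1:ℝ))) hT
    (measurable_const.indicator hB) (fun x => by by_cases h : x ∈ B <;> simp [h])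
  let Θ : X → ℤ → unitInterval := fun x k =>
    ⟨φ (((T.toEquiv : Equiv.Perm X) ^ k) x), hφ.2.2.2.1 _⟩
  have hΘ : Measurable Θ :=
    measurable_pi_lambda _ fun k => ((hφ.zpow hT k).2.1).subtype_mk
  have hlim : ∀ k, ∃ f, IsLim μ T 𝒰 f (fun x => (Θ x k : ℝ)) := fun k => ⟨_, hφ.zpow hT k⟩
  have hs : ∀ x, Θ (T x) = shiftZ (Θ x) := by
    intro x
    ext k
    show φ (((T.toEquiv : Equiv.Perm X) ^ k) (T x)) = φ (((T.toEquiv : Equiv.Perm X) ^ (k + 1)) x)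
    rw [zpow_add_one]; rfl
  have hs' : ∀ x, Θ (T.symm x) = shiftZ.symm (Θ x) := by
    intro x
    apply shiftZ.injective
    rw [← hs]; simp
  have hle : MeasurableSpace.comap Θ inferInstance ≤ mX := hΘ.comap_le
  refine ⟨MeasurableSpace.comap Θ inferInstance, hle, ?_, ?_, ?_⟩
  · rintro s ⟨E, hE, rfl⟩
    refine ⟨⟨shiftZ ⁻¹' E, shiftZ.measurable hE, ?_⟩,
      ⟨shiftZ.symm ⁻¹' E, shiftZ.symm.measurable hE, ?_⟩⟩
    · ext x; simp [hs]
    · ext x; simp [hs']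
  · obtain ⟨E, hE, h0, h1⟩ := exists_set_of_not_const (μ := μ) hφ.2.1
      (fun c hc => not_const hT hA hB hφ hnt c hc)
    have e : φ ⁻¹' E = Θ ⁻¹' ((fun z : ℤ → unitInterval => (z 0 : ℝ)) ⁻¹' E) := by
      ext x; simp [Θ]
    refine ⟨φ ⁻¹' E, ⟨_, ?_, e.symm⟩, h0, h1⟩
    have : Measurable (fun z : ℤ → unitInterval => (z 0 : ℝ)) := by fun_prop
    exact this hE
  · intro W mW σ hσ S hSm hS hmix ρ hρ
    have hΘ' : Measurable[MeasurableSpace.comap Θ inferInstance] Θ := comap_measurable Θ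
    have hTm : Measurable[MeasurableSpace.comap Θ inferInstance,
        MeasurableSpace.comap Θ inferInstance] T := by
      rintro s ⟨E, hE, rfl⟩
      exact ⟨shiftZ ⁻¹' E, shiftZ.measurable hE, by ext x; simp [hs]⟩
    obtain ⟨hp0, hp1, hp2, hp3⟩ := @push_joining X (ℤ → unitInterval) W
      (MeasurableSpace.comap Θ inferInstance) _ mW Θ hΘ' T S shiftZ hs shiftZ.measurable hTm hSm
      (μ.trim hle) σ ρ hρ
    rw [trim_map μ hle hΘ'] at hp1
    obtain ⟨ρ', hρ', r1, r2, r3, r4⟩ := extension_joining μ T hT hΘ shiftZ hs σ hSm _ hp1 hp2 hp3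
    have hpt : @IsProbabilityMeasure X (MeasurableSpace.comap Θ inferInstance) (μ.trim hle) :=
      ⟨by rw [trim_measurableSet_eq hle (@MeasurableSet.univ X _)]; exact measure_univ⟩
    refine @finish_prod X (ℤ → unitInterval) W (MeasurableSpace.comap Θ inferInstance) _ mW Θ rfl
      (μ.trim hle) σ hpt hσ ρ fun E C hE hC => ?_
    rw [← r4 E C hE hC, factor_indep hT h𝒰 σ hS hmix ρ' r1 r2 r3 hΘ hlim hE hC,
      trim_measurableSet_eq hle (hΘ' hE)]
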